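/- Let g(w) = (w f_z(w))′ = f_z(w) + w f_z′(w). For every z > 2, every i ∈ {1, …, n} and every real u ≤ 1, E[g(W̄⁽ⁱ⁾ + u)] ≤ (25.8 + 20 e^{e² − 2}/√(2π)) · e^{−z/2}. -/

import Mathlib

open MeasureTheory ProbabilityTheory Real

/-- The standard normal cumulative distribution function. -/
noncomputable def Phi (z : ℝ) : ℝ :=
  (Real.sqrt (2 * Real.pi))⁻¹ * ∫ u in Set.Iic z, Real.exp (-u ^ 2 / 2)

/-- The bounded solution `f_z` of the Stein equation
`f'(w) - w f(w) = 1{w ≤ z} - Φ(z)`. -/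
noncomputable def fz (z w : ℝ) : ℝ :=
  if w ≤ z then Real.sqrt (2 * Real.pi) * Real.exp (w ^ 2 / 2) * Phi w * (1 - Phi z)
  else Real.sqrt (2 * Real.pi) * Real.exp (w ^ 2 / 2) * Phi z * (1 - Phi w)

/-- The derivative `f_z'`, expressed via the Stein equation. -/
noncomputable def fz' (z w : ℝ) : ℝ :=
  w * fz z w + (if w ≤ z then 1 else 0) - Phi z

/-- The truncation `x̄ᵢ = ξᵢ 1{ξᵢ ≤ 1}`. -/
noncomputable def xbar {Ω : Type*} {n : ℕ} (ξ : Fin n → Ω → ℝ) (i : Fin n) (ω : Ω) : ℝ :=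
  if ξ i ω ≤ 1 then ξ i ω else 0

/-- `W̄ = ∑ᵢ x̄ᵢ`. -/
noncomputable def Wbar {Ω : Type*} {n : ℕ} (ξ : Fin n → Ω → ℝ) (ω : Ω) : ℝ :=
  ∑ i, xbar ξ i ω

/-- `W̄⁽ⁱ⁾ = W̄ - x̄ᵢ`. -/
noncomputable def Wbari {Ω : Type*} {n : ℕ} (ξ : Fin n → Ω → ℝ) (i : Fin n) (ω : Ω) : ℝ :=
  Wbar ξ ω - xbar ξ i ω

/-- `K̄ᵢ(t) = E[x̄ᵢ (1{0 ≤ t ≤ x̄ᵢ} - 1{x̄ᵢ ≤ t < 0})]`. -/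
noncomputable def Kbar {Ω : Type*} [MeasureSpace Ω] {n : ℕ} (ξ : Fin n → Ω → ℝ)
    (i : Fin n) (t : ℝ) : ℝ :=
  ∫ ω, xbar ξ i ω * ((if 0 ≤ t ∧ t ≤ xbar ξ i ω then (1 : ℝ) else 0)
    - (if xbar ξ i ω ≤ t ∧ t < 0 then (1 : ℝ) else 0))

/-- `β₂ = ∑ᵢ E[ξᵢ² 1{|ξᵢ| > 1}]`. -/
noncomputable def beta2 {Ω : Type*} [MeasureSpace Ω] {n : ℕ} (ξ : Fin n → Ω → ℝ) : ℝ :=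
  ∑ i, ∫ ω, (if 1 < |ξ i ω| then (ξ i ω) ^ 2 else 0)

/-- `β₃ = ∑ᵢ E[|ξᵢ|³ 1{|ξᵢ| ≤ 1}]`. -/
noncomputable def beta3 {Ω : Type*} [MeasureSpace Ω] {n : ℕ} (ξ : Fin n → Ω → ℝ) : ℝ :=
  ∑ i, ∫ ω, (if |ξ i ω| ≤ 1 then |ξ i ω| ^ 3 else 0)

/-!
Write `m w = √(2π) e^{w²/2} (1 - Φ w)` for the Mills ratio. Since `Φ w = 1 - Φ (-w)`, the function
`g` equals `(1 - Φ z) h (-w)` for `w ≤ z` and `Φ z h w` for `w > z`, where `h w = (1 + w²) m w - w`.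
Integrating `(u - w) e^{-u²/2}` and `(u - w)² e^{-u²/2}` over `u > w` gives `w m w ≤ 1` and
`0 ≤ h w`, and together with `1 - Φ w ≤ e^{-w²/2}` for `w ≥ 0` this yields
`0 ≤ g w ≤ (z + 1) e^{w - z} + e^{-z}` for `z ≥ 2`. It remains to control an exponential moment: as
`e^{x̄} ≤ 1 + x + x²` for the truncation `x̄` of `x` at `1`, independence gives `E e^{W̄⁽ⁱ⁾} ≤ e`.
Half of the factor `e^{-z}` absorbs `z + 1`, which leaves the constant `2 e² + 1 ≤ 25.8`.
-/

section GaussianIntegrals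

open Polynomial

lemma integrable_eval_mul_exp_neg_sq_div_two (p : ℝ[X]) :
    Integrable fun u : ℝ ↦ p.eval u * exp (-u ^ 2 / 2) := by
  induction p using Polynomial.induction_on' with
  | add p q hp hq => simpa only [eval_add, add_mul] using! hp.add hq
  | monomial k a =>
    have hk : Integrable fun u : ℝ ↦ u ^ (k : ℝ) * exp (-(1 / 2) * u ^ 2) :=
      integrable_rpow_mul_exp_neg_mul_sq (by norm_num) (by linarith [k.cast_nonneg (α := ℝ)])
    refine (hk.const_mul a).congr (.of_forall fun u ↦ ?_)
    simp only [eval_monomial, rpow_natCast, mul_assoc]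
    ring_nf

lemma hasDerivAt_eval_mul_exp_neg_sq_div_two (p : ℝ[X]) (u : ℝ) :
    HasDerivAt (fun v : ℝ ↦ p.eval v * exp (-v ^ 2 / 2))
      ((derivative p - X * p).eval u * exp (-u ^ 2 / 2)) u := by
  have hexp : HasDerivAt (fun v : ℝ ↦ exp (-v ^ 2 / 2)) (exp (-u ^ 2 / 2) * -u) u := by
    refine ((((hasDerivAt_id u).fun_pow 2).fun_neg.div_const 2).exp).congr_deriv ?_
    simp only [id_eq]
    ring
  refine ((p.hasDerivAt u).mul hexp).congr_deriv ?_
  simp only [eval_sub, eval_mul, eval_X]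
  ring

lemma integral_Ioi_eval_derivative_sub_X_mul (p : ℝ[X]) (w : ℝ) :
    ∫ u in Set.Ioi w, (derivative p - X * p).eval u * exp (-u ^ 2 / 2) =
      -(p.eval w * exp (-w ^ 2 / 2)) := by
  have hderiv := hasDerivAt_eval_mul_exp_neg_sq_div_two p
  have hint' := (integrable_eval_mul_exp_neg_sq_div_two (derivative p - X * p)).integrableOn
    (s := Set.Ioi w)
  have hlim := tendsto_zero_of_hasDerivAt_of_integrableOn_Ioi (fun u _ ↦ hderiv u) hint'
    (integrable_eval_mul_exp_neg_sq_div_two p).integrableOn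
  rw [integral_Ioi_of_hasDerivAt_of_tendsto' (fun u _ ↦ hderiv u) hint' hlim, zero_sub]

lemma integral_Ioi_eval_derivative_sub_X_mul_add_C (p : ℝ[X]) (c w : ℝ) :
    ∫ u in Set.Ioi w, (derivative p - X * p + C c).eval u * exp (-u ^ 2 / 2) =
      c * (∫ u in Set.Ioi w, exp (-u ^ 2 / 2)) - p.eval w * exp (-w ^ 2 / 2) := by
  have hint (q : ℝ[X]) := (integrable_eval_mul_exp_neg_sq_div_two q).integrableOn (s := Set.Ioi w)
  simp_rw [eval_add (p := derivative p - X * p), add_mul]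
  rw [integral_add (hint _) (hint _), integral_Ioi_eval_derivative_sub_X_mul]
  simp_rw [eval_C, integral_const_mul]
  ring

lemma integral_Ioi_sub_mul_exp_neg_sq_div_two (w : ℝ) :
    ∫ u in Set.Ioi w, (u - w) * exp (-u ^ 2 / 2) =
      exp (-w ^ 2 / 2) - w * ∫ u in Set.Ioi w, exp (-u ^ 2 / 2) := by
  convert integral_Ioi_eval_derivative_sub_X_mul_add_C (-1) (-w) w using 1
  · simp [sub_eq_add_neg]
  · simp only [eval_neg, eval_one]
    ring

lemma integral_Ioi_sub_sq_mul_exp_neg_sq_div_two (w : ℝ) :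
    ∫ u in Set.Ioi w, (u - w) ^ 2 * exp (-u ^ 2 / 2) =
      (1 + w ^ 2) * (∫ u in Set.Ioi w, exp (-u ^ 2 / 2)) - w * exp (-w ^ 2 / 2) := by
  convert integral_Ioi_eval_derivative_sub_X_mul_add_C (C (2 * w) - X) (1 + w ^ 2) w using 1
  · refine integral_congr_ae (.of_forall fun u ↦ ?_)
    simp only [eval_add, eval_sub, eval_mul, eval_C, eval_X, eval_zero, eval_one,
      derivative_sub, derivative_C, derivative_X]
    ring
  · simp only [eval_sub, eval_C, eval_X]
    ring

end GaussianIntegrals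

section NormalDistribution

lemma real_gaussianReal_zero_one (s : Set ℝ) :
    (gaussianReal 0 1).real s = (√(2 * π))⁻¹ * ∫ u in s, exp (-u ^ 2 / 2) := by
  rw [measureReal_def, gaussianReal_apply_eq_integral _ one_ne_zero, ENNReal.toReal_ofReal
    (integral_nonneg fun u ↦ gaussianPDFReal_nonneg 0 1 u), ← integral_const_mul]
  simp [gaussianPDFReal]

lemma Phi_eq_real_gaussianReal (w : ℝ) : Phi w = (gaussianReal 0 1).real (Set.Iic w) :=
  (real_gaussianReal_zero_one _).symm

lemma one_sub_Phi_eq_real_gaussianReal (w : ℝ) :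
    1 - Phi w = (gaussianReal 0 1).real (Set.Ioi w) := by
  rw [Phi_eq_real_gaussianReal, ← Set.compl_Iic, probReal_compl_eq_one_sub measurableSet_Iic]

lemma Phi_nonneg (w : ℝ) : 0 ≤ Phi w :=
  (Phi_eq_real_gaussianReal w).symm ▸ measureReal_nonneg

lemma Phi_le_one (w : ℝ) : Phi w ≤ 1 :=
  (Phi_eq_real_gaussianReal w).symm ▸ measureReal_le_one

lemma one_sub_Phi_nonneg (w : ℝ) : 0 ≤ 1 - Phi w :=
  sub_nonneg.2 (Phi_le_one w)

lemma one_sub_Phi_neg (w : ℝ) : 1 - Phi (-w) = Phi w := by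
  rw [one_sub_Phi_eq_real_gaussianReal, real_gaussianReal_zero_one, Phi, ← integral_comp_neg_Iic]
  simp

lemma one_sub_Phi_le_exp_neg_sq_div_two {w : ℝ} (hw : 0 ≤ w) : 1 - Phi w ≤ exp (-w ^ 2 / 2) := by
  calc 1 - Phi w
      ≤ (gaussianReal 0 1).real {u | w ≤ id u} := by
        rw [one_sub_Phi_eq_real_gaussianReal]
        exact measureReal_mono fun u (hu : w < u) ↦ hu.le
    _ ≤ exp (-w * w) * mgf id (gaussianReal 0 1) w :=
        measure_ge_le_exp_mul_mgf w hw (integrable_exp_mul_gaussianReal w)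
    _ = exp (-w ^ 2 / 2) := by
        rw [mgf_id_gaussianReal, ← exp_add]
        congr 1
        push_cast
        ring

end NormalDistribution

section MillsRatio

/-- The Mills ratio `(1 - Φ w) / φ w` of the standard normal distribution, with the density
`φ w = e^{-w²/2} / √(2π)` cleared from the denominator. For fixed `z`, the branches of `fz` are
constant multiples of `millsRatio (-w)` and `millsRatio w`. -/
noncomputable def millsRatio (w : ℝ) : ℝ :=
  √(2 * π) * exp (w ^ 2 / 2) * (1 - Phi w)

lemma millsRatio_eq_integral (w : ℝ) :
    millsRatio w = exp (w ^ 2 / 2) * ∫ u in Set.Ioi w, exp (-u ^ 2 / 2) := by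
  rw [millsRatio, one_sub_Phi_eq_real_gaussianReal, real_gaussianReal_zero_one]
  field_simp

lemma millsRatio_nonneg (w : ℝ) : 0 ≤ millsRatio w := by
  have := one_sub_Phi_nonneg w
  unfold millsRatio
  positivity

lemma exp_sq_div_two_mul_exp_neg_sq_div_two (w : ℝ) :
    exp (w ^ 2 / 2) * exp (-w ^ 2 / 2) = 1 := by
  rw [← exp_add, neg_div, add_neg_cancel, exp_zero]

lemma mul_millsRatio_le_one (w : ℝ) : w * millsRatio w ≤ 1 := by
  have hnonneg : 0 ≤ ∫ u in Set.Ioi w, (u - w) * exp (-u ^ 2 / 2) :=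
    setIntegral_nonneg measurableSet_Ioi fun u hu ↦
      mul_nonneg (sub_nonneg.2 (le_of_lt hu)) (exp_nonneg _)
  rw [integral_Ioi_sub_mul_exp_neg_sq_div_two] at hnonneg
  rw [millsRatio_eq_integral]
  linear_combination exp (w ^ 2 / 2) * hnonneg + exp_sq_div_two_mul_exp_neg_sq_div_two w

lemma millsRatio_le_one {w : ℝ} (hw : 1 ≤ w) : millsRatio w ≤ 1 :=
  (le_mul_of_one_le_left (millsRatio_nonneg w) hw).trans (mul_millsRatio_le_one w)

lemma le_one_add_sq_mul_millsRatio (w : ℝ) : w ≤ (1 + w ^ 2) * millsRatio w := by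
  have hnonneg : 0 ≤ ∫ u in Set.Ioi w, (u - w) ^ 2 * exp (-u ^ 2 / 2) := by positivity
  rw [integral_Ioi_sub_sq_mul_exp_neg_sq_div_two] at hnonneg
  rw [millsRatio_eq_integral]
  linear_combination exp (w ^ 2 / 2) * hnonneg - w * exp_sq_div_two_mul_exp_neg_sq_div_two w

lemma one_add_sq_mul_millsRatio_sub_le {w : ℝ} (hw : 0 ≤ w) :
    (1 + w ^ 2) * millsRatio w - w ≤ millsRatio w := by
  linear_combination w * mul_millsRatio_le_one w

lemma millsRatio_le_sqrt_two_pi {w : ℝ} (hw : 0 ≤ w) : millsRatio w ≤ √(2 * π) := by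
  calc millsRatio w
      ≤ √(2 * π) * exp (w ^ 2 / 2) * exp (-w ^ 2 / 2) := by
        unfold millsRatio
        gcongr
        exact one_sub_Phi_le_exp_neg_sq_div_two hw
    _ = √(2 * π) := by rw [mul_assoc, exp_sq_div_two_mul_exp_neg_sq_div_two, mul_one]

lemma millsRatio_neg (w : ℝ) : millsRatio (-w) = √(2 * π) * exp (w ^ 2 / 2) * Phi w := by
  rw [millsRatio, neg_sq, one_sub_Phi_neg]

lemma sqrt_two_pi_mul_one_sub_Phi (w : ℝ) :
    √(2 * π) * (1 - Phi w) = millsRatio w * exp (-w ^ 2 / 2) := by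
  rw [millsRatio]
  linear_combination -√(2 * π) * (1 - Phi w) * exp_sq_div_two_mul_exp_neg_sq_div_two w

lemma mul_one_sub_Phi_le_exp_neg_sq_div_two {z : ℝ} (hz : 0 ≤ z) :
    z * (1 - Phi z) ≤ exp (-z ^ 2 / 2) := by
  have hPhi := one_sub_Phi_nonneg z
  have hsqrt : 1 ≤ √(2 * π) := one_le_sqrt.2 (by linarith [pi_gt_three])
  calc z * (1 - Phi z)
      ≤ z * (√(2 * π) * (1 - Phi z)) := by
        gcongr
        exact le_mul_of_one_le_left hPhi hsqrt
    _ = z * millsRatio z * exp (-z ^ 2 / 2) := by rw [sqrt_two_pi_mul_one_sub_Phi, mul_assoc]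
    _ ≤ exp (-z ^ 2 / 2) := mul_le_of_le_one_left (exp_nonneg _) (mul_millsRatio_le_one z)

end MillsRatio

section SteinFunction

/-- The function `g w = (w f_z(w))' = f_z(w) + w f_z'(w)` whose expectation is to be bounded. At the
kink `w = z` of `f_z` the value of `f_z'` is the one `fz'` reads off the Stein equation. -/
noncomputable def steinG (z w : ℝ) : ℝ :=
  fz z w + w * fz' z w

lemma steinG_of_le {z w : ℝ} (hw : w ≤ z) :
    steinG z w = (1 - Phi z) * ((1 + w ^ 2) * millsRatio (-w) + w) := by
  simp only [steinG, fz', fz, if_pos hw, millsRatio_neg]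
  ring

lemma steinG_of_lt {z w : ℝ} (hw : z < w) :
    steinG z w = Phi z * ((1 + w ^ 2) * millsRatio w - w) := by
  simp only [steinG, fz', fz, if_neg hw.not_ge, millsRatio]
  ring

lemma steinG_nonneg (z w : ℝ) : 0 ≤ steinG z w := by
  rcases le_or_gt w z with hwz | hzw
  · rw [steinG_of_le hwz]
    refine mul_nonneg (one_sub_Phi_nonneg z) ?_
    linear_combination le_one_add_sq_mul_millsRatio (-w)
  · rw [steinG_of_lt hzw]
    exact mul_nonneg (Phi_nonneg z) (sub_nonneg.2 (le_one_add_sq_mul_millsRatio w))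

lemma exp_neg_sq_div_two_le_exp_neg {z : ℝ} (hz : 2 ≤ z) : exp (-z ^ 2 / 2) ≤ exp (-z) :=
  exp_le_exp.2 (by nlinarith)

lemma steinG_le_of_nonpos {z w : ℝ} (hz : 2 ≤ z) (hw : w ≤ 0) : steinG z w ≤ exp (-z) := by
  have hPhi := one_sub_Phi_nonneg z
  calc steinG z w
      = (1 - Phi z) * ((1 + (-w) ^ 2) * millsRatio (-w) - -w) := by
        rw [steinG_of_le (by linarith), neg_sq, sub_neg_eq_add]
    _ ≤ (1 - Phi z) * √(2 * π) := by
        gcongr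
        exact (one_add_sq_mul_millsRatio_sub_le (neg_nonneg.2 hw)).trans
          (millsRatio_le_sqrt_two_pi (neg_nonneg.2 hw))
    _ = millsRatio z * exp (-z ^ 2 / 2) := by rw [mul_comm, sqrt_two_pi_mul_one_sub_Phi]
    _ ≤ exp (-z ^ 2 / 2) := mul_le_of_le_one_left (exp_nonneg _) (millsRatio_le_one (by linarith))
    _ ≤ exp (-z) := exp_neg_sq_div_two_le_exp_neg hz

lemma one_sub_Phi_mul_millsRatio_neg_le {z w : ℝ} (hwz : w ≤ z) (hadd : 2 ≤ w + z) :
    (1 - Phi z) * millsRatio (-w) ≤ millsRatio z * exp (w - z) := by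
  have hPhi := one_sub_Phi_nonneg z
  have hexponent : -z ^ 2 / 2 + w ^ 2 / 2 ≤ w - z := by
    linear_combination (1 / 2) * mul_nonneg (sub_nonneg.2 hwz) (sub_nonneg.2 hadd)
  calc (1 - Phi z) * millsRatio (-w)
      = √(2 * π) * (1 - Phi z) * exp (w ^ 2 / 2) * Phi w := by
        rw [millsRatio_neg]
        ring
    _ ≤ √(2 * π) * (1 - Phi z) * exp (w ^ 2 / 2) :=
        mul_le_of_le_one_right (by positivity) (Phi_le_one w)
    _ = millsRatio z * exp (-z ^ 2 / 2 + w ^ 2 / 2) := by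
        rw [sqrt_two_pi_mul_one_sub_Phi, exp_add, mul_assoc]
    _ ≤ millsRatio z * exp (w - z) := by
        have := millsRatio_nonneg z
        gcongr

lemma steinG_le_of_nonneg_of_le {z w : ℝ} (hz : 2 ≤ z) (hw : 0 ≤ w) (hwz : w ≤ z) :
    steinG z w ≤ (z + 1) * exp (w - z) + exp (-z) := by
  have hPhi := one_sub_Phi_nonneg z
  have hquad : 1 + w ^ 2 ≤ (z + 1) * z := by nlinarith
  calc steinG z w
      = (1 + w ^ 2) * ((1 - Phi z) * millsRatio (-w)) + w * (1 - Phi z) := by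
        rw [steinG_of_le hwz]
        ring
    _ ≤ (z + 1) * z * (millsRatio z * exp (w - z)) + z * (1 - Phi z) := by
        refine add_le_add (mul_le_mul hquad ?_ ?_ (by positivity))
          (mul_le_mul_of_nonneg_right hwz hPhi)
        exacts [one_sub_Phi_mul_millsRatio_neg_le hwz (by linarith),
          mul_nonneg hPhi (millsRatio_nonneg _)]
    _ = (z + 1) * exp (w - z) * (z * millsRatio z) + z * (1 - Phi z) := by ring
    _ ≤ (z + 1) * exp (w - z) * 1 + exp (-z) := by
        gcongr
        exacts [mul_millsRatio_le_one z, (mul_one_sub_Phi_le_exp_neg_sq_div_two (by linarith)).trans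
          (exp_neg_sq_div_two_le_exp_neg hz)]
    _ = (z + 1) * exp (w - z) + exp (-z) := by rw [mul_one]

lemma steinG_le_one_of_lt {z w : ℝ} (hw : 1 ≤ w) (hzw : z < w) : steinG z w ≤ 1 := by
  rw [steinG_of_lt hzw]
  refine mul_le_one₀ (Phi_le_one z) (sub_nonneg.2 (le_one_add_sq_mul_millsRatio w)) ?_
  exact (one_add_sq_mul_millsRatio_sub_le (by linarith)).trans (millsRatio_le_one hw)

lemma steinG_le {z : ℝ} (hz : 2 ≤ z) (w : ℝ) :
    steinG z w ≤ (z + 1) * exp (w - z) + exp (-z) := by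
  rcases le_or_gt w z with hwz | hzw
  · rcases le_total w 0 with hw | hw
    · exact (steinG_le_of_nonpos hz hw).trans (le_add_of_nonneg_left (by positivity))
    · exact steinG_le_of_nonneg_of_le hz hw hwz
  · calc steinG z w
        ≤ 1 := steinG_le_one_of_lt (by linarith) hzw
      _ ≤ (z + 1) * exp (w - z) :=
        one_le_mul_of_one_le_of_one_le (by linarith) (one_le_exp (by linarith))
      _ ≤ (z + 1) * exp (w - z) + exp (-z) := le_add_of_nonneg_right (exp_nonneg _)

lemma integral_steinG_comp_le {Ω : Type*} {mΩ : MeasurableSpace Ω} {μ : Measure Ω}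
    [IsProbabilityMeasure μ] {X : Ω → ℝ} (hX : Integrable (fun ω ↦ exp (X ω)) μ) {z : ℝ}
    (hz : 2 ≤ z) :
    ∫ ω, steinG z (X ω) ∂μ ≤ ((z + 1) * (∫ ω, exp (X ω) ∂μ) + 1) * exp (-z) := by
  have hbound (w : ℝ) : steinG z w ≤ (z + 1) * exp (-z) * exp w + exp (-z) := by
    rw [mul_assoc, ← exp_add, neg_add_eq_sub]
    exact steinG_le hz w
  calc ∫ ω, steinG z (X ω) ∂μ
      ≤ ∫ ω, ((z + 1) * exp (-z) * exp (X ω) + exp (-z)) ∂μ :=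
        integral_mono_of_nonneg (.of_forall fun ω ↦ steinG_nonneg z (X ω))
          ((hX.const_mul _).add (integrable_const _)) (.of_forall fun ω ↦ hbound (X ω))
    _ = (z + 1) * exp (-z) * (∫ ω, exp (X ω) ∂μ) + exp (-z) := by
        rw [integral_add (hX.const_mul _) (integrable_const _), integral_const_mul]
        simp
    _ = ((z + 1) * (∫ ω, exp (X ω) ∂μ) + 1) * exp (-z) := by ring

end SteinFunction

section TruncatedSums

lemma exp_le_one_add_self_add_sq {x : ℝ} (hx : x ≤ 1) : exp x ≤ 1 + x + x ^ 2 := by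
  rcases le_total x (-1) with hx' | hx'
  · have : exp x ≤ 1 := exp_le_one_iff.2 (by linarith)
    nlinarith
  · linarith [(abs_le.1 (abs_exp_sub_one_sub_id_le (abs_le.2 ⟨hx', hx⟩))).2]

variable {a t : ℝ}

lemma exp_mul_indicator_Iic_le (ha : 0 ≤ a) (ht : 0 ≤ t) (hta : t * a ≤ 1) (x : ℝ) :
    exp (t * (Set.Iic a).indicator id x) ≤ 1 + t * x + t ^ 2 * x ^ 2 := by
  by_cases hx : x ≤ a
  · rw [Set.indicator_of_mem (Set.mem_Iic.2 hx), id_eq, ← mul_pow]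
    exact exp_le_one_add_self_add_sq ((mul_le_mul_of_nonneg_left hx ht).trans hta)
  · rw [Set.indicator_of_notMem (by simpa using hx), mul_zero, exp_zero]
    have : 0 ≤ x := ha.trans (not_le.1 hx).le
    linarith [mul_nonneg ht this, mul_nonneg (sq_nonneg t) (sq_nonneg x)]

variable {Ω ι : Type*} {mΩ : MeasurableSpace Ω} {μ : Measure Ω}

lemma mgf_indicator_Iic_comp_le [IsProbabilityMeasure μ] {X : Ω → ℝ} (hX : MemLp X 2 μ)
    (hmean : ∫ ω, X ω ∂μ ≤ 0) (ha : 0 ≤ a) (ht : 0 ≤ t) (hta : t * a ≤ 1) :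
    mgf ((Set.Iic a).indicator id ∘ X) μ t ≤ exp (t ^ 2 * ∫ ω, X ω ^ 2 ∂μ) := by
  have hX₁ : Integrable (fun ω ↦ 1 + t * X ω) μ :=
    (integrable_const 1).add ((hX.integrable one_le_two).const_mul t)
  have hX₂ : Integrable (fun ω ↦ t ^ 2 * X ω ^ 2) μ := hX.integrable_sq.const_mul _
  calc mgf ((Set.Iic a).indicator id ∘ X) μ t
      ≤ ∫ ω, (1 + t * X ω + t ^ 2 * X ω ^ 2) ∂μ :=
        integral_mono_of_nonneg (.of_forall fun ω ↦ exp_nonneg _) (hX₁.add hX₂)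
          (.of_forall fun ω ↦ exp_mul_indicator_Iic_le ha ht hta (X ω))
    _ = 1 + t * (∫ ω, X ω ∂μ) + t ^ 2 * ∫ ω, X ω ^ 2 ∂μ := by
        rw [integral_add hX₁ hX₂, integral_add (integrable_const 1)
          ((hX.integrable one_le_two).const_mul t), integral_const_mul, integral_const_mul]
        simp
    _ ≤ t ^ 2 * (∫ ω, X ω ^ 2 ∂μ) + 1 := by
        linarith [mul_nonpos_of_nonneg_of_nonpos ht hmean]
    _ ≤ exp (t ^ 2 * ∫ ω, X ω ^ 2 ∂μ) := add_one_le_exp _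

lemma mgf_sum_indicator_Iic_comp_le {X : ι → Ω → ℝ} (hindep : iIndepFun X μ)
    (hX : ∀ i, MemLp (X i) 2 μ) {s : Finset ι} (hmean : ∀ i ∈ s, ∫ ω, X i ω ∂μ ≤ 0)
    (ha : 0 ≤ a) (ht : 0 ≤ t) (hta : t * a ≤ 1) :
    mgf (∑ i ∈ s, (Set.Iic a).indicator id ∘ X i) μ t ≤
      exp (t ^ 2 * ∑ i ∈ s, ∫ ω, X i ω ^ 2 ∂μ) := by
  have := hindep.isProbabilityMeasure
  have htrunc : Measurable ((Set.Iic a).indicator (id : ℝ → ℝ)) :=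
    measurable_id.indicator measurableSet_Iic
  rw [(hindep.comp _ fun _ ↦ htrunc).mgf_sum₀
    fun i ↦ htrunc.comp_aemeasurable (hX i).aemeasurable, Finset.mul_sum, exp_sum]
  exact Finset.prod_le_prod (fun i _ ↦ mgf_nonneg)
    fun i hi ↦ mgf_indicator_Iic_comp_le (hX i) (hmean i hi) ha ht hta

lemma integrable_exp_mul_sum_indicator_Iic_comp [IsFiniteMeasure μ] {X : ι → Ω → ℝ}
    (hX : ∀ i, AEMeasurable (X i) μ) (ha : 0 ≤ a) (ht : 0 ≤ t) (s : Finset ι) :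
    Integrable (fun ω ↦ exp (t * (∑ i ∈ s, (Set.Iic a).indicator id ∘ X i) ω)) μ := by
  have htrunc : Measurable ((Set.Iic a).indicator (id : ℝ → ℝ)) :=
    measurable_id.indicator measurableSet_Iic
  refine integrable_exp_mul_of_le t (s.card * a) ht
    (s.aemeasurable_sum fun i _ ↦ htrunc.comp_aemeasurable (hX i)) (.of_forall fun ω ↦ ?_)
  rw [Finset.sum_apply, ← nsmul_eq_mul]
  exact s.sum_le_card_nsmul _ a fun i _ ↦ Set.indicator_apply_le' id fun _ ↦ ha

lemma Wbari_eq_sum_indicator_Iic_comp {n : ℕ} (ξ : Fin n → Ω → ℝ) (i : Fin n) :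
    Wbari ξ i = ∑ j ∈ Finset.univ.erase i, (Set.Iic 1).indicator id ∘ ξ j := by
  ext ω
  simp [Wbari, Wbar, xbar, Set.indicator_apply, Finset.sum_erase_eq_sub]

lemma mgf_Wbari_one_le {n : ℕ} {ξ : Fin n → Ω → ℝ} (hindep : iIndepFun ξ μ)
    (hL2 : ∀ i, MemLp (ξ i) 2 μ) (hmean : ∀ i, ∫ ω, ξ i ω ∂μ ≤ 0)
    (hvar : ∑ i, ∫ ω, (ξ i ω) ^ 2 ∂μ ≤ 1) (i : Fin n) : mgf (Wbari ξ i) μ 1 ≤ exp 1 := by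
  rw [Wbari_eq_sum_indicator_Iic_comp]
  refine (mgf_sum_indicator_Iic_comp_le hindep hL2 (fun j _ ↦ hmean j) zero_le_one zero_le_one
    (mul_one 1).le).trans (exp_le_exp.2 ?_)
  rw [one_pow, one_mul]
  exact (Finset.sum_le_sum_of_subset_of_nonneg (Finset.erase_subset i _)
    fun j _ _ ↦ integral_nonneg fun ω ↦ sq_nonneg (ξ j ω)).trans hvar

lemma integrable_exp_Wbari [IsFiniteMeasure μ] {n : ℕ} {ξ : Fin n → Ω → ℝ}
    (hξ : ∀ i, AEMeasurable (ξ i) μ) (i : Fin n) : Integrable (fun ω ↦ exp (Wbari ξ i ω)) μ := by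
  simpa only [Wbari_eq_sum_indicator_Iic_comp, one_mul] using
    integrable_exp_mul_sum_indicator_Iic_comp hξ zero_le_one zero_le_one (Finset.univ.erase i)

end TruncatedSums

lemma add_one_mul_add_one_mul_exp_neg_le {c z : ℝ} (hc : 0 ≤ c) (hz : 0 ≤ z) :
    ((z + 1) * c + 1) * exp (-z) ≤ (2 * c + 1) * exp (-z / 2) := by
  have hlin : z + 1 ≤ 2 * exp (z / 2) := by linarith [add_one_le_exp (z / 2)]
  have hone : 1 ≤ exp (z / 2) := one_le_exp (by linarith)
  calc ((z + 1) * c + 1) * exp (-z)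
      ≤ (2 * exp (z / 2) * c + exp (z / 2)) * exp (-z) := by gcongr
    _ = (2 * c + 1) * (exp (z / 2) * exp (-z)) := by ring
    _ = (2 * c + 1) * exp (-z / 2) := by
        rw [← exp_add]
        ring_nf

lemma two_mul_exp_two_add_one_le : 2 * exp 2 + 1 ≤ 25.8 := by
  have hexp : exp 2 = exp 1 * exp 1 := by rw [← exp_add, one_add_one_eq_two]
  nlinarith [exp_one_lt_d9, exp_pos 1]

/-- Bound on E[g(Wbar^(i) + u)] where g(w) = (w f_z(w))' = f_z(w) + w f_z'(w). -/
theorem expectation_g_bound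
    {Ω : Type*} [MeasureSpace Ω] [IsProbabilityMeasure (ℙ : Measure Ω)]
    {n : ℕ} (ξ : Fin n → Ω → ℝ)
    (hmeas : ∀ i, Measurable (ξ i))
    (hindep : iIndepFun ξ ℙ)
    (hL2 : ∀ i, MemLp (ξ i) 2 ℙ)
    (hmean : ∀ i, ∫ ω, ξ i ω = 0)
    (hvar : ∑ i, ∫ ω, (ξ i ω) ^ 2 = 1)
    (z : ℝ) (hz : 2 < z) (i : Fin n) (u : ℝ) (hu : u ≤ 1) :
    (∫ ω, (fz z (Wbari ξ i ω + u) + (Wbari ξ i ω + u) * fz' z (Wbari ξ i ω + u)))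
      ≤ (25.8 + 20 * Real.exp (Real.exp 1 ^ 2 - 2) / Real.sqrt (2 * Real.pi))
          * Real.exp (-z / 2) := by
  have hexp : ∫ ω, exp (Wbari ξ i ω + u) ≤ exp 2 :=
    calc ∫ ω, exp (Wbari ξ i ω + u)
        = mgf (Wbari ξ i) ℙ 1 * exp u := by simp [mgf, exp_add, integral_mul_const]
      _ ≤ exp 1 * exp 1 := by
        gcongr
        exact mgf_Wbari_one_le hindep hL2 (fun j ↦ (hmean j).le) hvar.le i
      _ = exp 2 := by rw [← exp_add, one_add_one_eq_two]
  have hint : Integrable fun ω ↦ exp (Wbari ξ i ω + u) := by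
    simpa only [exp_add] using
      (integrable_exp_Wbari (fun j ↦ (hmeas j).aemeasurable) i).mul_const (exp u)
  calc ∫ ω, steinG z (Wbari ξ i ω + u)
      ≤ ((z + 1) * (∫ ω, exp (Wbari ξ i ω + u)) + 1) * exp (-z) :=
        integral_steinG_comp_le hint hz.le
    _ ≤ ((z + 1) * exp 2 + 1) * exp (-z) := by gcongr
    _ ≤ (2 * exp 2 + 1) * exp (-z / 2) :=
        add_one_mul_add_one_mul_exp_neg_le (exp_nonneg 2) (by linarith)
    _ ≤ (25.8 + 20 * exp (exp 1 ^ 2 - 2) / √(2 * π)) * exp (-z / 2) := by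
        refine mul_le_mul_of_nonneg_right ?_ (exp_nonneg _)
        exact le_add_of_le_of_nonneg two_mul_exp_two_add_one_le (by positivity)
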